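/- Purified samples offer no advantage (Corollary corollary:purification-useless): Let Q = (Qyes, Qno) be a pair of disjoint sets of density matrices on Fin d, let 0 ≤ s < c ≤ 1, and let N ≥ 1. Then there exists a (c,s)-tester for Q with sample complexity N if and only if there exists a (c,s)-tester for Purify(Q) with sample complexity N, where Purify(Q) = (Purify(Qyes), Purify(Qno)) is the property of bipartite pure states in ℂ^d ⊗ ℂ^d given by Purify(R) = { unit vectors ψ : (Fin d × Fin d) → ℂ such that tr_B(ψψ†) ∈ R }. -/

import Mathlib

open scoped ComplexConjugate ComplexOrder Kronecker Matrix
open MeasureTheory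

namespace PaperStmt

/-- The rank-one matrix `ψψ†` associated with a vector `ψ`. -/
noncomputable def outer {ι : Type*} (ψ : ι → ℂ) : Matrix ι ι ℂ :=
  Matrix.of fun x y => ψ x * conj (ψ y)

/-- The `N`-fold tensor power of a square matrix `ρ`. -/
noncomputable def tpow {ι : Type*} (ρ : Matrix ι ι ℂ) (N : ℕ) : Matrix (Fin N → ι) (Fin N → ι) ℂ :=
  Matrix.of fun x y => ∏ i, ρ (x i) (y i)

/-- `ψ` is a unit vector (for the ℓ² norm). -/
def IsUnitVec {ι : Type*} [Fintype ι] (ψ : ι → ℂ) : Prop :=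
  ∑ x, Complex.normSq (ψ x) = 1

/-- `0 ⊑ T ⊑ 1` in the Loewner order. -/
def IsTester {κ : Type*} [Fintype κ] [DecidableEq κ] (T : Matrix κ κ ℂ) : Prop :=
  T.PosSemidef ∧ ((1 : Matrix κ κ ℂ) - T).PosSemidef

/-- `ρ` is a density matrix: positive semidefinite with unit trace. -/
def IsDensity {ι : Type*} [Fintype ι] (ρ : Matrix ι ι ℂ) : Prop :=
  ρ.PosSemidef ∧ ρ.trace = 1

/-- The acceptance probability `tr (T · ρ^{⊗N})` of a tester `T` on `N` samples of `ρ`. -/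
noncomputable def acc {ι : Type*} [Fintype ι] {N : ℕ}
    (T : Matrix (Fin N → ι) (Fin N → ι) ℂ) (ρ : Matrix ι ι ℂ) : ℝ :=
  ((T * tpow ρ N).trace).re

/-- The trace distance `½ ∑ᵢ |λᵢ(ρ - σ)|` between (Hermitian) matrices. -/
noncomputable def traceDist {κ : Type*} [Fintype κ] [DecidableEq κ]
    (ρ σ : Matrix κ κ ℂ) : ℝ :=
  if h : (ρ - σ).IsHermitian then (1 / 2) * ∑ i, |h.eigenvalues i| else 0

/-- The local tester on `H_A` determined by a matrix `M` acting on Alice's registers. -/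
noncomputable def localA {d N : ℕ} (M : Matrix (Fin N → Fin d) (Fin N → Fin d) ℂ) :
    Matrix (Fin N → Fin d × Fin d) (Fin N → Fin d × Fin d) ℂ :=
  Matrix.of fun x y =>
    M (fun i => (x i).1) (fun i => (y i).1) *
      (if (fun i => (x i).2) = (fun i => (y i).2) then 1 else 0)

/-- The vector `(I ⊗ U) ψ` : the unitary `U` applied to the `B` part of `ψ`. -/
noncomputable def applyB {d : ℕ} (U : Matrix (Fin d) (Fin d) ℂ) (ψ : Fin d × Fin d → ℂ) :
    Fin d × Fin d → ℂ :=
  fun p => ∑ k, U p.2 k * ψ (p.1, k)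

/-- The partial trace over the second (`B`) tensor factor. -/
noncomputable def ptraceB {d : ℕ} (M : Matrix (Fin d × Fin d) (Fin d × Fin d) ℂ) :
    Matrix (Fin d) (Fin d) ℂ :=
  Matrix.of fun a b => ∑ j, M (a, j) (b, j)


/-- The unitary group is compact. -/
theorem compactSpace_unitary (d : ℕ) : CompactSpace (Matrix.unitaryGroup (Fin d) ℂ) := by
  have hcl : IsClosed (Matrix.unitaryGroup (Fin d) ℂ : Set (Matrix (Fin d) (Fin d) ℂ)) := by
    have : (Matrix.unitaryGroup (Fin d) ℂ : Set (Matrix (Fin d) (Fin d) ℂ))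
        = {A | A * star A = 1} := by
      ext A
      exact Matrix.mem_unitaryGroup_iff
    rw [this]
    exact isClosed_eq (by fun_prop) continuous_const
  have hK : IsCompact (Set.pi Set.univ fun _ : Fin d => Set.pi Set.univ fun _ : Fin d =>
      Metric.closedBall (0 : ℂ) 1) :=
    isCompact_univ_pi fun _ => isCompact_univ_pi fun _ => isCompact_closedBall _ _
  refine isCompact_iff_compactSpace.mp (IsCompact.of_isClosed_subset hK hcl ?_)
  intro A hA i _ j _
  simpa using entry_norm_bound_of_unitary hA i j

/-- The Haar averaging functional on the unitary group. -/
theorem exists_average (d : ℕ) :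
    ∃ E : C(Matrix.unitaryGroup (Fin d) ℂ, ℂ) →ₗ[ℂ] ℂ,
      (∀ z : ℂ, E (ContinuousMap.const _ z) = z) ∧
      (∀ f g : C(Matrix.unitaryGroup (Fin d) ℂ, ℂ), (∀ u, g u = conj (f u)) → E g = conj (E f)) ∧
      (∀ (f : C(Matrix.unitaryGroup (Fin d) ℂ, ℂ)) (c : ℝ), (∀ u, c ≤ (f u).re) → c ≤ (E f).re) ∧
      (∀ (f : C(Matrix.unitaryGroup (Fin d) ℂ, ℂ)) (c : ℝ), (∀ u, (f u).re ≤ c) → (E f).re ≤ c) ∧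
      (∀ (V : Matrix.unitaryGroup (Fin d) ℂ) (f g : C(Matrix.unitaryGroup (Fin d) ℂ, ℂ)),
        (∀ u, g u = f (V * u)) → E g = E f) := by
  haveI := compactSpace_unitary d
  letI : MeasurableSpace (Matrix.unitaryGroup (Fin d) ℂ) := borel _
  haveI : BorelSpace (Matrix.unitaryGroup (Fin d) ℂ) := ⟨rfl⟩
  haveI : IsTopologicalGroup (Matrix.unitaryGroup (Fin d) ℂ) :=
    inferInstanceAs (IsTopologicalGroup (unitary (Matrix (Fin d) (Fin d) ℂ)))
  let μ : Measure (Matrix.unitaryGroup (Fin d) ℂ) := Measure.haarMeasure ⊤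
  haveI : IsProbabilityMeasure μ := ⟨by
    have := Measure.haarMeasure_self (K₀ := (⊤ : TopologicalSpace.PositiveCompacts (Matrix.unitaryGroup (Fin d) ℂ)))
    simpa using this⟩
  have hint : ∀ f : C(Matrix.unitaryGroup (Fin d) ℂ, ℂ), Integrable f μ := fun f =>
    f.continuous.integrable_of_hasCompactSupport (HasCompactSupport.of_compactSpace _)
  refine ⟨⟨⟨fun f => ∫ u, f u ∂μ, ?_⟩, ?_⟩, ?_, ?_, ?_, ?_, ?_⟩
  · intro f g
    exact integral_add (hint f) (hint g)
  · intro z f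
    exact integral_const_mul z _
  · intro z
    simp
  · intro f g h
    simp [h, integral_conj]
  · intro f c h
    have h1 : (∫ u, f u ∂μ).re = ∫ u, (f u).re ∂μ := (integral_re (hint f)).symm
    have h2 : ∫ _u, c ∂μ ≤ ∫ u, (f u).re ∂μ :=
      integral_mono (integrable_const c) (hint f).re h
    simpa [h1] using h2
  · intro f c h
    have h1 : (∫ u, f u ∂μ).re = ∫ u, (f u).re ∂μ := (integral_re (hint f)).symm
    have h2 : ∫ u, (f u).re ∂μ ≤ ∫ _u, c ∂μ :=
      integral_mono (hint f).re (integrable_const c) h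
    simpa [h1] using h2
  · intro V f g h
    simp only [LinearMap.coe_mk, AddHom.coe_mk, h]
    exact integral_mul_left_eq_self (μ := μ) (fun u => f u) V

section tensor

variable {ι : Type*} [Fintype ι] [DecidableEq ι] {d N : ℕ}

theorem tpow_mul (A B : Matrix ι ι ℂ) (N : ℕ) : tpow (A * B) N = tpow A N * tpow B N := by
  ext x y
  simp only [tpow, Matrix.of_apply, Matrix.mul_apply, Finset.prod_univ_sum, Fintype.piFinset_univ,
    Finset.prod_mul_distrib]

theorem tpow_conjTranspose (A : Matrix ι ι ℂ) (N : ℕ) : tpow Aᴴ N = (tpow A N)ᴴ := by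
  ext x y
  simp [tpow, Matrix.conjTranspose_apply]

theorem tpow_diagonal (e : ι → ℂ) (N : ℕ) :
    tpow (Matrix.diagonal e) N = Matrix.diagonal fun x => ∏ i, e (x i) := by
  ext x y
  by_cases h : x = y
  · subst h
    simp [tpow]
  · rw [Matrix.diagonal_apply_ne _ h]
    obtain ⟨i, hi⟩ := Function.ne_iff.mp h
    simp only [tpow, Matrix.of_apply]
    exact Finset.prod_eq_zero (Finset.mem_univ i) (Matrix.diagonal_apply_ne _ hi)

theorem tpow_one (N : ℕ) : tpow (1 : Matrix ι ι ℂ) N = 1 := by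
  rw [← Matrix.diagonal_one, tpow_diagonal]
  simp

theorem localA_tpow (S : Matrix (Fin d) (Fin d) ℂ) :
    localA (tpow S N) = tpow (S ⊗ₖ (1 : Matrix (Fin d) (Fin d) ℂ)) N := by
  ext x y
  simp only [localA, tpow, Matrix.of_apply, Matrix.kroneckerMap_apply, Finset.prod_mul_distrib]
  congr 1
  have := congrFun (congrFun (tpow_one (ι := Fin d) N) (fun i => (x i).2)) (fun i => (y i).2)
  simp only [tpow, Matrix.of_apply, Matrix.one_apply] at this
  simp only [Matrix.one_apply]
  exact this.symm

theorem localA_tpow_mul (S R : Matrix (Fin d) (Fin d) ℂ) :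
    localA (tpow (S * R) N) = localA (tpow S N) * localA (tpow R N) := by
  simp only [localA_tpow, ← tpow_mul, ← Matrix.mul_kronecker_mul, mul_one]

theorem localA_tpow_conjTranspose (S : Matrix (Fin d) (Fin d) ℂ) :
    localA (tpow Sᴴ N) = (localA (tpow S N))ᴴ := by
  simp only [localA_tpow, ← tpow_conjTranspose, Matrix.conjTranspose_kronecker,
    Matrix.conjTranspose_one]

theorem localA_one : localA (1 : Matrix (Fin N → Fin d) (Fin N → Fin d) ℂ) = 1 := by
  rw [← tpow_one, localA_tpow, Matrix.one_kronecker_one, tpow_one]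

theorem localA_eq (M : Matrix (Fin N → Fin d) (Fin N → Fin d) ℂ) :
    localA M = (M ⊗ₖ (1 : Matrix (Fin N → Fin d) (Fin N → Fin d) ℂ)).submatrix
      (fun x => (fun i => (x i).1, fun i => (x i).2))
      (fun x => (fun i => (x i).1, fun i => (x i).2)) := by
  ext x y
  simp [localA, Matrix.one_apply]

theorem localA_posSemidef {M : Matrix (Fin N → Fin d) (Fin N → Fin d) ℂ} (h : M.PosSemidef) :
    (localA M).PosSemidef := by
  rw [localA_eq]
  exact (h.kronecker Matrix.PosSemidef.one).submatrix _

theorem localA_sub (A B : Matrix (Fin N → Fin d) (Fin N → Fin d) ℂ) :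
    localA (A - B) = localA A - localA B := by
  ext x y
  simp only [localA, Matrix.of_apply, Matrix.sub_apply, sub_mul]

/-- The partial trace over all `B` registers. -/
noncomputable def ptrN (K : Matrix (Fin N → Fin d × Fin d) (Fin N → Fin d × Fin d) ℂ) :
    Matrix (Fin N → Fin d) (Fin N → Fin d) ℂ :=
  ∑ w : Fin N → Fin d, K.submatrix (fun a i => (a i, w i)) (fun a i => (a i, w i))

theorem ptrN_apply (K : Matrix (Fin N → Fin d × Fin d) (Fin N → Fin d × Fin d) ℂ) (a b) :
    ptrN K a b = ∑ w : Fin N → Fin d, K (fun i => (a i, w i)) (fun i => (b i, w i)) := by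
  simp [ptrN, Matrix.sum_apply]

theorem ptrN_posSemidef {K : Matrix (Fin N → Fin d × Fin d) (Fin N → Fin d × Fin d) ℂ}
    (h : K.PosSemidef) : (ptrN K).PosSemidef :=
  Matrix.posSemidef_sum _ fun _ _ => h.submatrix _

theorem ptrN_sub (A B : Matrix (Fin N → Fin d × Fin d) (Fin N → Fin d × Fin d) ℂ) :
    ptrN (A - B) = ptrN A - ptrN B := by
  ext a b
  simp [ptrN_apply]

theorem ptrN_tpow (R : Matrix (Fin d × Fin d) (Fin d × Fin d) ℂ) :
    ptrN (tpow R N) = tpow (ptraceB R) N := by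
  ext a b
  simp only [ptrN_apply, tpow, ptraceB, Matrix.of_apply, Finset.prod_univ_sum,
    Fintype.piFinset_univ]

theorem trace_mul_localA (K : Matrix (Fin N → Fin d × Fin d) (Fin N → Fin d × Fin d) ℂ)
    (M : Matrix (Fin N → Fin d) (Fin N → Fin d) ℂ) :
    (K * localA M).trace = (ptrN K * M).trace := by
  have hsum : ∀ f : (Fin N → Fin d × Fin d) → ℂ,
      ∑ x, f x = ∑ a : Fin N → Fin d, ∑ w : Fin N → Fin d, f (fun i => (a i, w i)) := by
    intro f
    rw [← Fintype.sum_prod_type' (f := fun (a w : Fin N → Fin d) => f (fun i => (a i, w i)))]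
    exact Fintype.sum_equiv (Equiv.arrowProdEquivProdArrow _ _ _) _ _ (fun x => rfl)
  simp only [Matrix.trace, Matrix.diag, Matrix.mul_apply, hsum, localA, Matrix.of_apply,
    ptrN_apply, mul_ite, mul_one, mul_zero, Finset.sum_ite_eq', Finset.sum_ite_eq, Finset.sum_mul,
    Finset.mem_univ, if_true]
  refine Finset.sum_congr rfl fun a _ => ?_
  rw [Finset.sum_comm]

theorem acc_localA (M : Matrix (Fin N → Fin d) (Fin N → Fin d) ℂ)
    (R : Matrix (Fin d × Fin d) (Fin d × Fin d) ℂ) :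
    acc (localA M) R = acc M (ptraceB R) := by
  unfold acc
  rw [Matrix.trace_mul_comm, trace_mul_localA, ptrN_tpow, Matrix.trace_mul_comm]

/-- The purification vector associated with a matrix. -/
def vecm (A : Matrix (Fin d) (Fin d) ℂ) : Fin d × Fin d → ℂ := fun p => A p.1 p.2

theorem outer_vecm_mul (S A : Matrix (Fin d) (Fin d) ℂ) :
    outer (vecm (S * A)) = (S ⊗ₖ (1 : Matrix (Fin d) (Fin d) ℂ)) * outer (vecm A) *
      (S ⊗ₖ (1 : Matrix (Fin d) (Fin d) ℂ))ᴴ := by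
  have h : ∀ ψ : Fin d × Fin d → ℂ, outer ψ = Matrix.vecMulVec ψ (star ψ) := by
    intro ψ
    ext x y
    simp [outer, Matrix.vecMulVec_apply]
  have h2 : vecm (S * A) = (S ⊗ₖ (1 : Matrix (Fin d) (Fin d) ℂ)) *ᵥ vecm A := by
    ext ⟨a, b⟩
    simp [vecm, Matrix.mulVec, dotProduct, Matrix.mul_apply, Fintype.sum_prod_type,
      Matrix.one_apply]
  rw [h, h, h2, Matrix.mul_vecMulVec, Matrix.vecMulVec_mul, Matrix.star_mulVec]

theorem ptraceB_outer_vecm (A : Matrix (Fin d) (Fin d) ℂ) :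
    ptraceB (outer (vecm A)) = A * Aᴴ := by
  ext a b
  simp [ptraceB, outer, vecm, Matrix.mul_apply]

theorem isUnitVec_vecm {A : Matrix (Fin d) (Fin d) ℂ} (h : (A * Aᴴ).trace = 1) :
    IsUnitVec (vecm A) := by
  unfold IsUnitVec
  have : ((∑ x, Complex.normSq (vecm A x) : ℝ) : ℂ) = (A * Aᴴ).trace := by
    simp [Matrix.trace, Matrix.mul_apply, vecm, Fintype.sum_prod_type, Complex.mul_conj]
  rw [h] at this
  exact_mod_cast this

/-- The `N`-th tensor power of the (unnormalised) pure state given by a matrix. -/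
noncomputable def pst (N : ℕ) (A : Matrix (Fin d) (Fin d) ℂ) :
    Matrix (Fin N → Fin d × Fin d) (Fin N → Fin d × Fin d) ℂ := tpow (outer (vecm A)) N

theorem pst_mul (S A : Matrix (Fin d) (Fin d) ℂ) :
    pst N (S * A) = localA (tpow S N) * pst N A * (localA (tpow S N))ᴴ := by
  rw [pst, outer_vecm_mul, tpow_mul, tpow_mul, tpow_conjTranspose, localA_tpow, pst]

theorem continuous_pst : Continuous (pst N : Matrix (Fin d) (Fin d) ℂ → _) := by
  refine continuous_matrix fun x y => ?_
  simp only [pst, tpow, outer, vecm, Matrix.of_apply]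
  refine continuous_finsetProd _ fun i _ => ?_
  exact (continuous_id.matrix_elem _ _).mul
    (Complex.continuous_conj.comp (continuous_id.matrix_elem _ _))

theorem pst_eq_vecMulVec (A : Matrix (Fin d) (Fin d) ℂ) :
    pst N A = Matrix.vecMulVec (fun x => ∏ i, vecm A (x i)) (star fun x => ∏ i, vecm A (x i)) := by
  ext x y
  simp [pst, tpow, outer, Matrix.vecMulVec_apply, Finset.prod_mul_distrib]

theorem pst_posSemidef (A : Matrix (Fin d) (Fin d) ℂ) : (pst N A).PosSemidef := by
  rw [pst_eq_vecMulVec]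
  exact Matrix.posSemidef_vecMulVec_self_star _

end tensor

/-- Existence of the twirled maximally entangled operator. -/
theorem exists_twirl (d N : ℕ) :
    ∃ G : Matrix (Fin N → Fin d × Fin d) (Fin N → Fin d × Fin d) ℂ,
      G.PosSemidef ∧ ptrN G = 1 ∧
      (∀ V ∈ Matrix.unitaryGroup (Fin d) ℂ, Commute (localA (tpow V N)) G) ∧
      (∀ (φ : Matrix (Fin N → Fin d × Fin d) (Fin N → Fin d × Fin d) ℂ →ₗ[ℂ] ℂ) (c : ℝ),
        (∀ U ∈ Matrix.unitaryGroup (Fin d) ℂ, c ≤ (φ (pst N U)).re) → c ≤ (φ G).re) ∧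
      (∀ (φ : Matrix (Fin N → Fin d × Fin d) (Fin N → Fin d × Fin d) ℂ →ₗ[ℂ] ℂ) (c : ℝ),
        (∀ U ∈ Matrix.unitaryGroup (Fin d) ℂ, (φ (pst N U)).re ≤ c) → (φ G).re ≤ c) := by
  obtain ⟨E, hconst, hstar, hlow, hup, hinv⟩ := exists_average d
  let F : (Matrix (Fin N → Fin d × Fin d) (Fin N → Fin d × Fin d) ℂ →ₗ[ℂ] ℂ) →
      C(Matrix.unitaryGroup (Fin d) ℂ, ℂ) := fun φ =>
    ⟨fun U => φ (pst N U.1), (LinearMap.continuous_of_finiteDimensional φ).comp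
      (continuous_pst.comp continuous_subtype_val)⟩
  let ent : (Fin N → Fin d × Fin d) → (Fin N → Fin d × Fin d) →
      (Matrix (Fin N → Fin d × Fin d) (Fin N → Fin d × Fin d) ℂ →ₗ[ℂ] ℂ) := fun x y =>
    Matrix.entryLinearMap ℂ ℂ x y
  let G : Matrix (Fin N → Fin d × Fin d) (Fin N → Fin d × Fin d) ℂ :=
    Matrix.of fun x y => E (F (ent x y))
  have key : ∀ φ, φ G = E (F φ) := by
    intro φ
    have hφ : ∀ M, φ M = ∑ x, ∑ y, φ (Matrix.single x y 1) * M x y := by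
      intro M
      conv_lhs => rw [Matrix.matrix_eq_sum_single M]
      simp only [map_sum]
      refine Finset.sum_congr rfl fun x _ => Finset.sum_congr rfl fun y _ => ?_
      rw [mul_comm, ← smul_eq_mul, ← map_smul, Matrix.smul_single, smul_eq_mul, mul_one]
    have hF : F φ = ∑ x, ∑ y, φ (Matrix.single x y 1) • F (ent x y) := by
      ext U
      simp only [ContinuousMap.coe_sum, Finset.sum_apply, ContinuousMap.coe_smul, Pi.smul_apply,
        smul_eq_mul]
      exact hφ _
    rw [hF, hφ]
    simp only [map_sum, map_smul, smul_eq_mul]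
    rfl
  have hherm : G.IsHermitian := by
    ext x y
    rw [Matrix.conjTranspose_apply]
    refine (hstar (F (ent y x)) (F (ent x y)) fun U => ?_).symm
    exact ((pst_posSemidef (N := N) U.1).1.apply x y).symm
  refine ⟨G, ?_, ?_, ?_, ?_, ?_⟩
  · refine Matrix.PosSemidef.of_dotProduct_mulVec_nonneg hherm fun x => ?_
    let φ : Matrix (Fin N → Fin d × Fin d) (Fin N → Fin d × Fin d) ℂ →ₗ[ℂ] ℂ :=
      { toFun := fun M => star x ⬝ᵥ (M *ᵥ x)
        map_add' := fun A B => by rw [Matrix.add_mulVec, dotProduct_add]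
        map_smul' := fun z A => by simp [Matrix.smul_mulVec] }
    have hnn : ∀ U : Matrix.unitaryGroup (Fin d) ℂ, 0 ≤ F φ U := fun U =>
      (pst_posSemidef (N := N) U.1).dotProduct_mulVec_nonneg x
    change 0 ≤ φ G
    rw [key]
    rw [Complex.nonneg_iff]
    constructor
    · exact hlow _ 0 fun U => (Complex.nonneg_iff.mp (hnn U)).1
    · have h := hstar (F φ) (F φ) fun U => by
        rw [eq_comm, Complex.conj_eq_iff_im]
        exact (Complex.nonneg_iff.mp (hnn U)).2.symm
      rw [eq_comm, Complex.conj_eq_iff_im] at h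
      exact h.symm
  · ext a b
    let φ : Matrix (Fin N → Fin d × Fin d) (Fin N → Fin d × Fin d) ℂ →ₗ[ℂ] ℂ :=
      { toFun := fun M => ptrN M a b
        map_add' := fun A B => by simp [ptrN_apply, Finset.sum_add_distrib]
        map_smul' := fun z A => by simp [ptrN_apply, Finset.mul_sum] }
    change φ G = _
    rw [key]
    have : F φ = ContinuousMap.const _ ((1 : Matrix (Fin N → Fin d) (Fin N → Fin d) ℂ) a b) := by
      ext U
      change ptrN (pst N U.1) a b = _
      rw [pst, ptrN_tpow, ptraceB_outer_vecm, ← Matrix.star_eq_conjTranspose,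
        Matrix.mem_unitaryGroup_iff.mp U.2, tpow_one]
      rfl
    rw [this, hconst]
  · intro V hV
    have h1 : localA (tpow V N) * G * (localA (tpow V N))ᴴ = G := by
      ext x y
      let φ : Matrix (Fin N → Fin d × Fin d) (Fin N → Fin d × Fin d) ℂ →ₗ[ℂ] ℂ :=
        { toFun := fun M => (localA (tpow V N) * M * (localA (tpow V N))ᴴ) x y
          map_add' := fun A B => by simp [mul_add, add_mul]
          map_smul' := fun z A => by simp }
      change φ G = E (F (ent x y))
      rw [key]
      refine hinv ⟨V, hV⟩ _ _ fun U => ?_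
      change (localA (tpow V N) * pst N U.1 * (localA (tpow V N))ᴴ) x y = pst N (V * U.1) x y
      rw [pst_mul]
    have h2 : (localA (tpow V N))ᴴ * localA (tpow V N) = 1 := by
      rw [← localA_tpow_conjTranspose, ← localA_tpow_mul, ← Matrix.star_eq_conjTranspose,
        Matrix.mem_unitaryGroup_iff'.mp hV, tpow_one, localA_one]
    calc localA (tpow V N) * G
        = localA (tpow V N) * G * ((localA (tpow V N))ᴴ * localA (tpow V N)) := by
          rw [h2, mul_one]
      _ = (localA (tpow V N) * G * (localA (tpow V N))ᴴ) * localA (tpow V N) := by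
          simp only [mul_assoc]
      _ = G * localA (tpow V N) := by rw [h1]
  · intro φ c h
    rw [key]
    exact hlow _ c fun U => h U.1 U.2
  · intro φ c h
    rw [key]
    exact hup _ c fun U => h U.1 U.2

theorem localA_tpow_diagonal {d N : ℕ} (D : Fin d → ℂ) :
    localA (tpow (Matrix.diagonal D) N) = Matrix.diagonal fun x => ∏ i, D (x i).1 := by
  rw [localA_tpow, ← Matrix.diagonal_one, Matrix.diagonal_kronecker_diagonal, tpow_diagonal]
  simp

theorem commute_diagonal {d N : ℕ}
    (G : Matrix (Fin N → Fin d × Fin d) (Fin N → Fin d × Fin d) ℂ)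
    (hG : ∀ V ∈ Matrix.unitaryGroup (Fin d) ℂ, Commute (localA (tpow V N)) G) (D : Fin d → ℂ) :
    Commute (localA (tpow (Matrix.diagonal D) N)) G := by
  have hcount : ∀ x y, G x y ≠ 0 → ∀ j : Fin d,
      (Finset.univ.filter fun i => (x i).1 = j).card =
        (Finset.univ.filter fun i => (y i).1 = j).card := by
    intro x y hxy j
    have hζ := Complex.isPrimitiveRoot_exp (N + 1) (Nat.succ_ne_zero N)
    set ζ := Complex.exp (2 * Real.pi * Complex.I / ((N + 1 : ℕ) : ℂ)) with hζd
    have hn : ‖ζ‖ = 1 := hζ.norm'_eq_one (Nat.succ_ne_zero N)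
    have hV : Matrix.diagonal (fun k : Fin d => if k = j then ζ else 1) ∈
        Matrix.unitaryGroup (Fin d) ℂ := by
      rw [Matrix.mem_unitaryGroup_iff, Matrix.star_eq_conjTranspose,
        Matrix.diagonal_conjTranspose, Matrix.diagonal_mul_diagonal, ← Matrix.diagonal_one]
      congr 1
      ext k
      by_cases hk : k = j
      · simp [hk, Complex.mul_conj, Complex.normSq_eq_norm_sq, hn]
      · simp [hk]
    have h := congrFun (congrFun (hG _ hV) x) y
    rw [localA_tpow_diagonal, Matrix.diagonal_mul, Matrix.mul_diagonal, mul_comm] at h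
    have h' := mul_left_cancel₀ hxy h
    simp only [Finset.prod_ite, Finset.prod_const, one_pow, mul_one] at h'
    refine hζ.pow_inj ?_ ?_ h'
    · exact Nat.lt_succ_of_le ((Finset.card_le_univ _).trans (by simp))
    · exact Nat.lt_succ_of_le ((Finset.card_le_univ _).trans (by simp))
  have hprod : ∀ x : Fin N → Fin d × Fin d, ∏ i, D (x i).1 =
      ∏ j, D j ^ (Finset.univ.filter fun i => (x i).1 = j).card := by
    intro x
    simp_rw [← Finset.prod_const]
    exact (Finset.prod_fiberwise' Finset.univ (fun i => (x i).1) D).symm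
  rw [localA_tpow_diagonal]
  ext x y
  rw [Matrix.diagonal_mul, Matrix.mul_diagonal]
  by_cases hxy : G x y = 0
  · simp [hxy]
  · rw [mul_comm, hprod x, hprod y]
    simp only [hcount x y hxy]

theorem exists_factor {d : ℕ} {ρ : Matrix (Fin d) (Fin d) ℂ} (h : ρ.PosSemidef) :
    ∃ W ∈ Matrix.unitaryGroup (Fin d) ℂ, ∃ D : Fin d → ℂ,
      ρ = (W * Matrix.diagonal D) * (W * Matrix.diagonal D)ᴴ := by
  refine ⟨h.1.eigenvectorUnitary, (h.1.eigenvectorUnitary).2,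
    fun i => ((Real.sqrt (h.1.eigenvalues i) : ℝ) : ℂ), ?_⟩
  have hs := h.1.spectral_theorem
  rw [Unitary.conjStarAlgAut_apply] at hs
  conv_lhs => rw [hs]
  rw [Matrix.conjTranspose_mul, Matrix.diagonal_conjTranspose, ← Matrix.star_eq_conjTranspose,
    mul_assoc, mul_assoc, ← mul_assoc (Matrix.diagonal _) (Matrix.diagonal _),
    Matrix.diagonal_mul_diagonal]
  congr 3
  ext i
  simp only [Function.comp, Pi.star_apply, Complex.star_def, Complex.conj_ofReal]
  rw [← Complex.ofReal_mul, Real.mul_self_sqrt (h.eigenvalues_nonneg i)]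
  rfl

open scoped MatrixOrder in
theorem exists_sqrt {κ : Type*} [Fintype κ] [DecidableEq κ] {G : Matrix κ κ ℂ}
    (h : G.PosSemidef) :
    ∃ R : Matrix κ κ ℂ, Rᴴ = R ∧ R * R = G ∧ ∀ A, Commute G A → Commute R A := by
  refine ⟨CFC.sqrt G, ?_, ?_, ?_⟩
  · exact (Matrix.nonneg_iff_posSemidef.mp (CFC.sqrt_nonneg G)).1
  · exact CFC.sqrt_mul_sqrt_self G h.nonneg
  · intro A hA
    rw [CFC.sqrt_eq_cfc]
    exact hA.cfc_nnreal _


/-- Corollary `corollary:purification-useless`: purified samples offer no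
advantage in mixed state testing. -/
theorem stmt_2 (d : ℕ) (hd : 1 ≤ d) (N : ℕ) (hN : 1 ≤ N)
    (Qyes Qno : Set (Matrix (Fin d) (Fin d) ℂ))
    (hdens : ∀ ρ ∈ Qyes ∪ Qno, IsDensity ρ)
    (hdisj : Disjoint Qyes Qno)
    (c s : ℝ) (hs0 : 0 ≤ s) (hsc : s < c) (hc1 : c ≤ 1) :
    (∃ T : Matrix (Fin N → Fin d) (Fin N → Fin d) ℂ,
      IsTester T ∧ (∀ ρ ∈ Qyes, c ≤ acc T ρ) ∧ (∀ ρ ∈ Qno, acc T ρ ≤ s)) ↔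
    (∃ T : Matrix (Fin N → Fin d × Fin d) (Fin N → Fin d × Fin d) ℂ,
      IsTester T ∧
      (∀ ψ : Fin d × Fin d → ℂ, IsUnitVec ψ → ptraceB (outer ψ) ∈ Qyes →
        c ≤ acc T (outer ψ)) ∧
      (∀ ψ : Fin d × Fin d → ℂ, IsUnitVec ψ → ptraceB (outer ψ) ∈ Qno →
        acc T (outer ψ) ≤ s)) := by
  constructor
  · rintro ⟨T, ⟨hT0, hT1⟩, hy, hn⟩
    refine ⟨localA T, ⟨localA_posSemidef hT0, ?_⟩, ?_, ?_⟩
    · rw [← localA_one, ← localA_sub]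
      exact localA_posSemidef hT1
    · intro ψ _ h
      rw [acc_localA]
      exact hy _ h
    · intro ψ _ h
      rw [acc_localA]
      exact hn _ h
  · rintro ⟨T, ⟨hT0, hT1⟩, hy, hn⟩
    obtain ⟨G, hG0, hG1, hGc, hlow, hup⟩ := exists_twirl d N
    obtain ⟨R, hRh, hRR, hRc⟩ := exists_sqrt hG0
    have main : ∀ ρ, IsDensity ρ → ∃ (S : Matrix (Fin d) (Fin d) ℂ)
        (φ : Matrix (Fin N → Fin d × Fin d) (Fin N → Fin d × Fin d) ℂ →ₗ[ℂ] ℂ),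
        S * Sᴴ = ρ ∧ (∀ U, (φ (pst N U)).re = acc T (outer (vecm (S * U)))) ∧
        (φ G).re = acc (ptrN (R * T * R)) ρ := by
      intro ρ hρ
      obtain ⟨W, hW, D, hWD⟩ := exists_factor hρ.1
      set S := W * Matrix.diagonal D with hS
      have hc : Commute (localA (tpow S N)) G := by
        rw [hS, localA_tpow_mul]
        exact (hGc W hW).mul_left (commute_diagonal G hGc D)
      have hcs : Commute (localA (tpow S N))ᴴ G := by
        have := congrArg Matrix.conjTranspose hc.eq
        rw [Matrix.conjTranspose_mul, Matrix.conjTranspose_mul, hG0.1.eq] at this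
        exact this.symm
      have hΛ : localA (tpow ρ N) = localA (tpow S N) * (localA (tpow S N))ᴴ := by
        rw [hWD, localA_tpow_mul, localA_tpow_conjTranspose]
      have hcR : Commute R (localA (tpow ρ N)) := by
        refine hRc _ ?_
        rw [hΛ]
        exact (hc.mul_left hcs).symm
      refine ⟨S,
        { toFun := fun M => (T * (localA (tpow S N) * M * (localA (tpow S N))ᴴ)).trace
          map_add' := fun A B => by simp [mul_add, add_mul]
          map_smul' := fun z A => by simp }, hWD.symm, ?_, ?_⟩
      · intro U
        change ((T * (localA (tpow S N) * pst N U * (localA (tpow S N))ᴴ)).trace).re = _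
        rw [← pst_mul]
        rfl
      · change ((T * (localA (tpow S N) * G * (localA (tpow S N))ᴴ)).trace).re = _
        have e : localA (tpow S N) * G * (localA (tpow S N))ᴴ = R * localA (tpow ρ N) * R := by
          rw [hc.eq, mul_assoc, ← hΛ, ← hRR, mul_assoc, hcR.eq, ← mul_assoc, hcR.eq]
        unfold acc
        rw [e, ← trace_mul_localA, ← mul_assoc, Matrix.trace_mul_comm]
        simp only [mul_assoc]
    refine ⟨ptrN (R * T * R), ⟨?_, ?_⟩, ?_, ?_⟩
    · have := hT0.mul_mul_conjTranspose_same R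
      rw [hRh] at this
      exact ptrN_posSemidef this
    · have := hT1.mul_mul_conjTranspose_same R
      rw [hRh, mul_sub, sub_mul, mul_one, hRR] at this
      rw [← hG1, ← ptrN_sub]
      exact ptrN_posSemidef this
    · intro ρ hρ
      have hd' := hdens ρ (Or.inl hρ)
      obtain ⟨S, φ, hSS, h1, h2⟩ := main ρ hd'
      rw [← h2]
      refine hlow φ c fun U hU => ?_
      have hSU : (S * U) * (S * U)ᴴ = ρ := by
        rw [Matrix.conjTranspose_mul, mul_assoc, ← mul_assoc U, ← Matrix.star_eq_conjTranspose U,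
          Matrix.mem_unitaryGroup_iff.mp hU, one_mul, hSS]
      rw [h1]
      refine hy _ (isUnitVec_vecm (by rw [hSU]; exact hd'.2)) ?_
      rw [ptraceB_outer_vecm, hSU]
      exact hρ
    · intro ρ hρ
      have hd' := hdens ρ (Or.inr hρ)
      obtain ⟨S, φ, hSS, h1, h2⟩ := main ρ hd'
      rw [← h2]
      refine hup φ s fun U hU => ?_
      have hSU : (S * U) * (S * U)ᴴ = ρ := by
        rw [Matrix.conjTranspose_mul, mul_assoc, ← mul_assoc U, ← Matrix.star_eq_conjTranspose U,
          Matrix.mem_unitaryGroup_iff.mp hU, one_mul, hSS]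
      rw [h1]
      refine hn _ (isUnitVec_vecm (by rw [hSU]; exact hd'.2)) ?_
      rw [ptraceB_outer_vecm, hSU]
      exact hρ

end PaperStmt
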